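/- arXiv:0708.3352 — 3 statements merged into one kernel-verified Lean document; each statement's English description precedes it below -/
import Mathlib

section
/- Let g ∈ (0,4) be a constant. Every regular perfect fluid solution with non-decreasing equation of state f whose pressure–density ratio satisfies p(r)/f(p(r)) < 2/√g − 1 for all r ∈ [0,R) obeys the surface bound 2M/R ≤ (8−2g)/(9−2g), where M = m(R) is the total mass and R the surface radius. -/
/-!
Compare the fluid at radius `r` with the star of constant density that has the same mass, pressure
and mean density `μ = 3m/(4πr³)` there. Continued outwards at the constant density `μ`, it has
`1 - 2M/R` equal to `B = (1 - 2m/r) ((μ + p)/(μ + 3p))²` at its surface, so `B` is a constant of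
motion of the constant-density equations, and `B = 1 - 2M/R` at the actual surface, where `p = 0`.
In general the TOV equations give `B' = C (μ - ρ) (x (μ + 3p)² - 12 μ p (1 - x))` with `x = 2m/r`
and `C > 0`. The density is at most the mean density, so `p/ρ ≤ 2/√g - 1` passes on to `p/μ`, and
this makes the last factor nonnegative wherever `B ≤ 1/(9 - 2g)`. As `B` exceeds `1/(9 - 2g)` near
the centre, it can never fall below it.
-/

open Filter Set Topology

theorem le_image_of_deriv_right_nonneg_of_le {h h' : ℝ → ℝ} {a b K : ℝ}
    (hcont : ContinuousOn h (Icc a b))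
    (hderiv : ∀ x ∈ Ico a b, HasDerivWithinAt h (h' x) (Ici x) x)
    (ha : K ≤ h a) (hnonneg : ∀ x ∈ Ico a b, h x ≤ K → 0 ≤ h' x) :
    ∀ ⦃x⦄, x ∈ Icc a b → K ≤ h x := by
  -- Comparing with a line of slope `-ε` makes the inequality between the derivatives strict.
  have le_line (ε : ℝ) (hε : 0 < ε) {x : ℝ} (hx : x ∈ Icc a b) : -h x ≤ -K + ε * (x - a) :=
    image_le_of_deriv_right_lt_deriv_boundary (f := fun t ↦ -h t)
      (B := fun t ↦ -K + ε * (t - a)) (B' := fun _ ↦ ε) hcont.neg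
      (fun t ht ↦ (hderiv t ht).neg) (by simpa using ha)
      (fun t ↦ by simpa using (((hasDerivAt_id t).sub_const a).const_mul ε).const_add (-K))
      (fun t ht heq ↦ by
        have : 0 ≤ ε * (t - a) := mul_nonneg hε.le (sub_nonneg.2 ht.1)
        linarith [hnonneg t ht (by linarith)]) hx
  intro x hx
  have hlim : Tendsto (fun ε : ℝ ↦ -K + ε * (x - a)) (𝓝[>] 0) (𝓝 (-K)) := by
    have : Continuous fun ε : ℝ ↦ -K + ε * (x - a) := by fun_prop
    simpa using (this.tendsto 0).mono_left nhdsWithin_le_nhds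
  have := ge_of_tendsto hlim (eventually_mem_nhdsWithin.mono fun ε hε ↦ le_line ε hε hx)
  linarith

/-- The mean density of the ball of radius `r`, whose mass is `m r`. -/
noncomputable def meanDensity (m : ℝ → ℝ) (r : ℝ) : ℝ := 3 * m r / (4 * Real.pi * r ^ 3)

/-- The compactness `2m/r` of the ball of radius `r`: its Schwarzschild radius over its radius. -/
noncomputable def compactness (m : ℝ → ℝ) (r : ℝ) : ℝ := 2 * m r / r

/-- The value of `1 - 2M/R` at the surface of the constant-density star whose mean density,
pressure and compactness at radius `r` are those of the profiles `m` and `p`. It serves as a lower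
barrier when integrating the TOV equations outwards from the centre. -/
noncomputable def buchdahlBarrier (m p : ℝ → ℝ) (r : ℝ) : ℝ :=
  (1 - compactness m r) * ((meanDensity m r + p r) / (meanDensity m r + 3 * p r)) ^ 2

section Algebra

variable {g x μ q : ℝ}

theorem mul_sq_add_le_of_div_le (hg : 0 < g) (hμ : 0 < μ) (hq : 0 ≤ q)
    (h : q / μ ≤ 2 / √g - 1) : g * (μ + q) ^ 2 ≤ 4 * μ ^ 2 := by
  have hratio : (μ + q) / μ ≤ 2 / √g := by
    rw [add_div, div_self hμ.ne']
    linarith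
  rw [div_le_div_iff₀ hμ (Real.sqrt_pos.2 hg)] at hratio
  calc g * (μ + q) ^ 2 = ((μ + q) * √g) ^ 2 := by rw [mul_pow, Real.sq_sqrt hg.le, mul_comm]
    _ ≤ (2 * μ) ^ 2 := by gcongr
    _ = 4 * μ ^ 2 := by ring

theorem lt_four_of_mul_sq_add_le (hμ : 0 < μ) (hq : 0 < q)
    (h : g * (μ + q) ^ 2 ≤ 4 * μ ^ 2) : g < 4 := by
  refine lt_of_mul_lt_mul_right (h.trans_lt ?_) (sq_nonneg (μ + q))
  gcongr
  linarith

theorem one_div_lt_sq_div (hμ : 0 < μ) (hq : 0 < q) (h : g * (μ + q) ^ 2 ≤ 4 * μ ^ 2) :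
    1 / (9 - 2 * g) < ((μ + q) / (μ + 3 * q)) ^ 2 := by
  have hg := lt_four_of_mul_sq_add_le hμ hq h
  rw [div_pow, div_lt_div_iff₀ (by linarith) (by positivity)]
  linarith [mul_pos hμ hq]

theorem twelve_mul_le_of_barrier_le (hx : x ≤ 1) (hμ : 0 < μ) (hq : 0 < q)
    (h : g * (μ + q) ^ 2 ≤ 4 * μ ^ 2)
    (hbarrier : (1 - x) * ((μ + q) / (μ + 3 * q)) ^ 2 ≤ 1 / (9 - 2 * g)) :
    12 * μ * q * (1 - x) ≤ x * (μ + 3 * q) ^ 2 := by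
  have hg := lt_four_of_mul_sq_add_le hμ hq h
  rw [div_pow, ← mul_div_assoc, div_le_div_iff₀ (by positivity) (by linarith)] at hbarrier
  -- `9 (μ + q)² - 8 μ² = (μ + 3 q)² + 12 μ q`
  linarith [mul_le_mul_of_nonneg_left h (sub_nonneg.2 hx)]

end Algebra

section PointwiseTOV

variable {m p : ℝ → ℝ} {r ρ : ℝ}

theorem hasDerivAt_meanDensity (hr : r ≠ 0) (hm : HasDerivAt m (4 * Real.pi * r ^ 2 * ρ) r) :
    HasDerivAt (meanDensity m) (3 * (ρ - meanDensity m r) / r) r := by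
  have hcube : HasDerivAt (fun t ↦ t ^ 3) (3 * r ^ 2) r := by simpa using hasDerivAt_pow 3 r
  refine ((hm.const_mul 3).div (hcube.const_mul (4 * Real.pi)) (by positivity)).congr_deriv ?_
  unfold meanDensity
  field_simp

theorem hasDerivAt_compactness (hr : r ≠ 0) (hmr : m r ≠ 0)
    (hm : HasDerivAt m (4 * Real.pi * r ^ 2 * ρ) r) :
    HasDerivAt (compactness m) (compactness m r * (3 * ρ / meanDensity m r - 1) / r) r := by
  refine ((hm.const_mul 2).div (hasDerivAt_id r) hr).congr_deriv ?_
  simp only [compactness, meanDensity, id]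
  field_simp

theorem tov_pressure_gradient_eq (hr : r ≠ 0) (hmr : m r ≠ 0) (hρ : ρ ≠ 0) :
    -(ρ * m r / r ^ 2) * (1 + p r / ρ) * (1 + 4 * Real.pi * r ^ 3 * p r / m r) *
        (1 - 2 * m r / r)⁻¹ =
      -((ρ + p r) * compactness m r * (meanDensity m r + 3 * p r) /
        (2 * r * meanDensity m r * (1 - compactness m r))) := by
  unfold compactness meanDensity
  generalize 1 - 2 * m r / r = A
  field_simp

theorem hasDerivAt_add_div_add_three_mul {μ : ℝ → ℝ} {μ' p' : ℝ} (hμ : HasDerivAt μ μ' r)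
    (hp : HasDerivAt p p' r) (hden : μ r + 3 * p r ≠ 0) :
    HasDerivAt (fun t ↦ (μ t + p t) / (μ t + 3 * p t))
      (2 * (p r * μ' - μ r * p') / (μ r + 3 * p r) ^ 2) r := by
  refine ((hμ.add hp).div (hμ.add (hp.const_mul 3)) hden).congr_deriv ?_
  simp only [Pi.add_apply]
  ring

theorem hasDerivAt_buchdahlBarrier (hr : 0 < r) (hmr : 0 < m r) (hx : compactness m r ≠ 1)
    (hp : 0 ≤ p r) (hm : HasDerivAt m (4 * Real.pi * r ^ 2 * ρ) r)
    (hp' : HasDerivAt p (-((ρ + p r) * compactness m r * (meanDensity m r + 3 * p r) /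
      (2 * r * meanDensity m r * (1 - compactness m r)))) r) :
    HasDerivAt (buchdahlBarrier m p)
      ((meanDensity m r + p r) * (meanDensity m r - ρ) /
        (r * meanDensity m r * (meanDensity m r + 3 * p r) ^ 3) *
        (compactness m r * (meanDensity m r + 3 * p r) ^ 2 -
          12 * meanDensity m r * p r * (1 - compactness m r))) r := by
  have hμ : 0 < meanDensity m r := by unfold meanDensity; positivity
  have hμ' := hasDerivAt_meanDensity hr.ne' hm
  have hx' := hasDerivAt_compactness hr.ne' hmr.ne' hm
  have hden : meanDensity m r + 3 * p r ≠ 0 := by positivity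
  have hone : 1 - compactness m r ≠ 0 := sub_ne_zero.2 hx.symm
  have hratio := hasDerivAt_add_div_add_three_mul hμ' hp' hden
  refine ((hx'.const_sub 1).mul (hratio.pow 2)).congr_deriv ?_
  simp only [Nat.cast_ofNat, Nat.add_one_sub_one, pow_one, Pi.pow_apply]
  generalize meanDensity m r = μ at *
  generalize compactness m r = x at *
  generalize p r = q at *
  field_simp
  ring

end PointwiseTOV

/-- A static ball of perfect fluid of radius `R` with density, mass and pressure profiles `ρ`, `m`
and `p`, solving the TOV equations with a regular centre. No equation of state is assumed: `ρ` is
an arbitrary function of the radius, constrained only on `[0, R)`. -/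
structure IsStaticFluidBall (R : ℝ) (ρ m p : ℝ → ℝ) : Prop where
  radius_pos : 0 < R
  continuousOn_mass : ContinuousOn m (Icc 0 R)
  continuousOn_pressure : ContinuousOn p (Icc 0 R)
  mass_zero : m 0 = 0
  two_mul_mass_lt : ∀ r ∈ Ioo 0 R, 2 * m r < r
  density_pos : ∀ r ∈ Ico 0 R, 0 < ρ r
  pressure_pos : ∀ r ∈ Ico 0 R, 0 < p r
  pressure_surface : p R = 0
  hasDerivAt_mass : ∀ r ∈ Ioo 0 R, HasDerivAt m (4 * Real.pi * r ^ 2 * ρ r) r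
  hasDerivAt_pressure : ∀ r ∈ Ioo 0 R,
    HasDerivAt p (-(ρ r * m r / r ^ 2) * (1 + p r / ρ r) *
      (1 + 4 * Real.pi * r ^ 3 * p r / m r) * (1 - 2 * m r / r)⁻¹) r
  tendsto_mass_div_cube :
    Tendsto (fun r ↦ m r / r ^ 3) (𝓝[>] 0) (𝓝 (4 * Real.pi / 3 * ρ 0))

namespace IsStaticFluidBall

variable {R r : ℝ} {ρ m p : ℝ → ℝ}

theorem exists_meanDensity_eq (h : IsStaticFluidBall R ρ m p) (hr : r ∈ Ioc 0 R) :
    ∃ c ∈ Ioo 0 r, meanDensity m r = ρ c := by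
  obtain ⟨c, hc, hratio⟩ := exists_ratio_hasDerivAt_eq_ratio_slope m
    (fun t ↦ 4 * Real.pi * t ^ 2 * ρ t) hr.1
    (h.continuousOn_mass.mono (Icc_subset_Icc_right hr.2))
    (fun t ht ↦ h.hasDerivAt_mass t ⟨ht.1, ht.2.trans_le hr.2⟩)
    (fun t ↦ t ^ 3) (fun t ↦ 3 * t ^ 2) (by fun_prop)
    (fun t _ ↦ by simpa using hasDerivAt_pow 3 t)
  refine ⟨c, hc, ?_⟩
  have hr0 : r ≠ 0 := hr.1.ne'
  have hc0 : c ≠ 0 := hc.1.ne'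
  simp only [h.mass_zero] at hratio
  unfold meanDensity
  field_simp
  refine mul_left_cancel₀ (pow_ne_zero 2 hc0) ?_
  linarith

theorem meanDensity_pos (h : IsStaticFluidBall R ρ m p) (hr : r ∈ Ioc 0 R) :
    0 < meanDensity m r := by
  obtain ⟨c, hc, hrc⟩ := h.exists_meanDensity_eq hr
  exact hrc ▸ h.density_pos c ⟨hc.1.le, hc.2.trans_le hr.2⟩

theorem density_le_meanDensity (h : IsStaticFluidBall R ρ m p) (hρ : AntitoneOn ρ (Ioo 0 R))
    (hr : r ∈ Ioo 0 R) : ρ r ≤ meanDensity m r := by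
  obtain ⟨c, hc, hrc⟩ := h.exists_meanDensity_eq ⟨hr.1, hr.2.le⟩
  exact hrc ▸ hρ ⟨hc.1, hc.2.trans hr.2⟩ hr hc.2.le

theorem mass_pos (h : IsStaticFluidBall R ρ m p) (hr : r ∈ Ioo 0 R) : 0 < m r := by
  have hr0 := hr.1
  have hμ := h.meanDensity_pos ⟨hr.1, hr.2.le⟩
  rw [meanDensity, div_pos_iff_of_pos_right (by positivity)] at hμ
  linarith

theorem compactness_pos (h : IsStaticFluidBall R ρ m p) (hr : r ∈ Ioo 0 R) :
    0 < compactness m r :=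
  div_pos (mul_pos two_pos (h.mass_pos hr)) hr.1

theorem compactness_lt_one (h : IsStaticFluidBall R ρ m p) (hr : r ∈ Ioo 0 R) :
    compactness m r < 1 :=
  (div_lt_one hr.1).2 (h.two_mul_mass_lt r hr)

theorem pressure_nonneg (h : IsStaticFluidBall R ρ m p) (hr : r ∈ Icc 0 R) : 0 ≤ p r := by
  rcases hr.2.eq_or_lt with rfl | hlt
  · exact h.pressure_surface.ge
  · exact (h.pressure_pos r ⟨hr.1, hlt⟩).le

theorem hasDerivAt_pressure_compactness (h : IsStaticFluidBall R ρ m p) (hr : r ∈ Ioo 0 R) :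
    HasDerivAt p (-((ρ r + p r) * compactness m r * (meanDensity m r + 3 * p r) /
      (2 * r * meanDensity m r * (1 - compactness m r)))) r :=
  (h.hasDerivAt_pressure r hr).congr_deriv <|
    tov_pressure_gradient_eq hr.1.ne' (h.mass_pos hr).ne'
      (h.density_pos r (Ioo_subset_Ico_self hr)).ne'

theorem antitoneOn_pressure (h : IsStaticFluidBall R ρ m p) : AntitoneOn p (Icc 0 R) := by
  refine antitoneOn_of_hasDerivWithinAt_nonpos (convex_Icc 0 R) h.continuousOn_pressure
    (fun r hr ↦ (h.hasDerivAt_pressure_compactness (interior_Icc.subset hr)).hasDerivWithinAt)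
    fun r hr ↦ ?_
  rw [interior_Icc] at hr
  have hr0 := hr.1
  have hρ := h.density_pos r (Ioo_subset_Ico_self hr)
  have hp := h.pressure_pos r (Ioo_subset_Ico_self hr)
  have hμ := h.meanDensity_pos (Ioo_subset_Ioc_self hr)
  have hx := h.compactness_pos hr
  have hx1 := sub_pos.2 (h.compactness_lt_one hr)
  exact neg_nonpos.2 (by positivity)

theorem antitoneOn_comp_pressure {f : ℝ → ℝ} (h : IsStaticFluidBall R ρ m p)
    (hf : MonotoneOn f (Ici 0)) : AntitoneOn (f ∘ p) (Icc 0 R) :=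
  hf.comp_AntitoneOn h.antitoneOn_pressure fun _ ↦ h.pressure_nonneg

theorem continuousOn_buchdahlBarrier (h : IsStaticFluidBall R ρ m p) :
    ContinuousOn (buchdahlBarrier m p) (Ioc 0 R) := by
  have hm : ContinuousOn m (Ioc 0 R) := h.continuousOn_mass.mono Ioc_subset_Icc_self
  have hp : ContinuousOn p (Ioc 0 R) := h.continuousOn_pressure.mono Ioc_subset_Icc_self
  have hx : ContinuousOn (compactness m) (Ioc 0 R) :=
    (hm.const_mul 2).div continuousOn_id fun r hr ↦ hr.1.ne'
  have hμ : ContinuousOn (meanDensity m) (Ioc 0 R) :=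
    (hm.const_mul 3).div (by fun_prop) fun r hr ↦ by have := hr.1; positivity
  have hden : ∀ r ∈ Ioc 0 R, meanDensity m r + 3 * p r ≠ 0 := fun r hr ↦ by
    have := h.meanDensity_pos hr
    have := h.pressure_nonneg (Ioc_subset_Icc_self hr)
    positivity
  exact (continuousOn_const.sub hx).mul
    (((hμ.add hp).div (hμ.add (hp.const_mul 3)) hden).pow 2)

theorem buchdahlBarrier_surface (h : IsStaticFluidBall R ρ m p) :
    buchdahlBarrier m p R = 1 - 2 * m R / R := by
  have hμ := h.meanDensity_pos (right_mem_Ioc.2 h.radius_pos)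
  simp [buchdahlBarrier, compactness, h.pressure_surface, hμ.ne']

theorem tendsto_meanDensity (h : IsStaticFluidBall R ρ m p) :
    Tendsto (meanDensity m) (𝓝[>] 0) (𝓝 (ρ 0)) := by
  have hlim := h.tendsto_mass_div_cube.const_mul (3 / (4 * Real.pi))
  have hρ : 3 / (4 * Real.pi) * (4 * Real.pi / 3 * ρ 0) = ρ 0 := by field_simp
  rw [hρ] at hlim
  exact hlim.congr fun r ↦ div_mul_div_comm 3 (4 * Real.pi) (m r) (r ^ 3)

theorem tendsto_compactness (h : IsStaticFluidBall R ρ m p) :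
    Tendsto (compactness m) (𝓝[>] 0) (𝓝 0) := by
  have hid : Tendsto (fun r : ℝ ↦ r) (𝓝[>] 0) (𝓝 0) := nhdsWithin_le_nhds
  have hlim := ((hid.pow 2).const_mul 2).mul h.tendsto_mass_div_cube
  rw [zero_pow two_ne_zero, mul_zero, zero_mul] at hlim
  refine hlim.congr' (eventually_mem_nhdsWithin.mono fun r hr ↦ ?_)
  have hr0 : r ≠ 0 := (mem_Ioi.1 hr).ne'
  unfold compactness
  field_simp

theorem tendsto_buchdahlBarrier (h : IsStaticFluidBall R ρ m p) :
    Tendsto (buchdahlBarrier m p) (𝓝[>] 0) (𝓝 (((ρ 0 + p 0) / (ρ 0 + 3 * p 0)) ^ 2)) := by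
  have hcentre : (0 : ℝ) ∈ Ico 0 R := left_mem_Ico.2 h.radius_pos
  have hρ := h.density_pos 0 hcentre
  have hp := h.pressure_pos 0 hcentre
  have hpcont := h.continuousOn_pressure 0 (left_mem_Icc.2 h.radius_pos.le)
  have hplim : Tendsto p (𝓝[>] 0) (𝓝 (p 0)) :=
    nhdsWithin_Ioo_eq_nhdsGT h.radius_pos ▸ (hpcont.mono Ioo_subset_Icc_self).tendsto
  have hratio := ((h.tendsto_meanDensity.add hplim).div
    (h.tendsto_meanDensity.add (hplim.const_mul 3)) (by positivity)).pow 2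
  have hlim := (h.tendsto_compactness.const_sub 1).mul hratio
  rwa [sub_zero, one_mul] at hlim

theorem one_div_le_buchdahlBarrier {g : ℝ} (h : IsStaticFluidBall R ρ m p)
    (hmean : ∀ r ∈ Ioo 0 R, ρ r ≤ meanDensity m r)
    (hcentre : g * (ρ 0 + p 0) ^ 2 ≤ 4 * ρ 0 ^ 2)
    (hratio : ∀ r ∈ Ioo 0 R, g * (meanDensity m r + p r) ^ 2 ≤ 4 * meanDensity m r ^ 2)
    (hr : r ∈ Ioc 0 R) : 1 / (9 - 2 * g) ≤ buchdahlBarrier m p r := by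
  have hzero : (0 : ℝ) ∈ Ico 0 R := left_mem_Ico.2 h.radius_pos
  obtain ⟨a, haK, ha⟩ : ∃ a, 1 / (9 - 2 * g) < buchdahlBarrier m p a ∧ a ∈ Ioo 0 r :=
    ((h.tendsto_buchdahlBarrier.eventually_const_lt (one_div_lt_sq_div (h.density_pos 0 hzero)
      (h.pressure_pos 0 hzero) hcentre)).and (eventually_mem_set.2 (Ioo_mem_nhdsGT hr.1))).exists
  have hsub : Ico a r ⊆ Ioo 0 R := fun t ht ↦ ⟨ha.1.trans_le ht.1, ht.2.trans_le hr.2⟩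
  refine le_image_of_deriv_right_nonneg_of_le
    (h.continuousOn_buchdahlBarrier.mono fun t ht ↦ ⟨ha.1.trans_le ht.1, ht.2.trans hr.2⟩)
    (fun t ht ↦ HasDerivAt.hasDerivWithinAt <|
      hasDerivAt_buchdahlBarrier (hsub ht).1 (h.mass_pos (hsub ht))
        (h.compactness_lt_one (hsub ht)).ne
        (h.pressure_nonneg (Ioo_subset_Icc_self (hsub ht)))
        (h.hasDerivAt_mass t (hsub ht)) (h.hasDerivAt_pressure_compactness (hsub ht)))
    haK.le (fun t ht hle ↦ ?_) (right_mem_Icc.2 ha.2.le)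
  have ht' := hsub ht
  have ht0 := ht'.1
  have hμ := h.meanDensity_pos (Ioo_subset_Ioc_self ht')
  have hp := h.pressure_pos t (Ioo_subset_Ico_self ht')
  have hρμ := sub_nonneg.2 (hmean t ht')
  have hfactor := sub_nonneg.2 <|
    twelve_mul_le_of_barrier_le (h.compactness_lt_one ht').le hμ hp (hratio t ht') hle
  positivity

end IsStaticFluidBall

theorem generalized_buchdahl_surface_inequality_general {g R : ℝ} {ρ m p : ℝ → ℝ} (hg : 0 < g)
    (h : IsStaticFluidBall R ρ m p) (hmean : ∀ r ∈ Ioo 0 R, ρ r ≤ meanDensity m r)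
    (hσ : ∀ r ∈ Ico 0 R, p r / ρ r ≤ 2 / √g - 1) :
    2 * m R / R ≤ (8 - 2 * g) / (9 - 2 * g) := by
  have hzero : (0 : ℝ) ∈ Ico 0 R := left_mem_Ico.2 h.radius_pos
  have hρ0 := h.density_pos 0 hzero
  have hp0 := h.pressure_pos 0 hzero
  have hcentre := mul_sq_add_le_of_div_le hg hρ0 hp0.le (hσ 0 hzero)
  have hratio (r : ℝ) (hr : r ∈ Ioo 0 R) :
      g * (meanDensity m r + p r) ^ 2 ≤ 4 * meanDensity m r ^ 2 := by
    have hr' := Ioo_subset_Ico_self hr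
    have hp := h.pressure_pos r hr'
    exact mul_sq_add_le_of_div_le hg (h.meanDensity_pos (Ioo_subset_Ioc_self hr)) hp.le <|
      (div_le_div_of_nonneg_left hp.le (h.density_pos r hr') (hmean r hr)).trans (hσ r hr')
  have hsurface :=
    h.one_div_le_buchdahlBarrier hmean hcentre hratio (right_mem_Ioc.2 h.radius_pos)
  rw [h.buchdahlBarrier_surface] at hsurface
  have hg4 := lt_four_of_mul_sq_add_le hρ0 hp0 hcentre
  have hK : (8 - 2 * g) / (9 - 2 * g) = 1 - 1 / (9 - 2 * g) := by
    rw [eq_sub_iff_add_eq, ← add_div, div_eq_one_iff_eq (by linarith)]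
    ring
  linarith

/-- **Generalized Buchdahl surface inequality.**
Let `g ∈ (0,4)`. Every regular perfect fluid solution (in units `G = c = 1`) with a
non-decreasing equation of state `ρ = f(p)` whose pressure–density ratio satisfies
`p(r)/f(p(r)) < 2/√g − 1` for all `r ∈ [0,R)` obeys `2M/R ≤ (8−2g)/(9−2g)`,
where `M = m(R)` is the total mass and `R` the surface radius. -/
theorem generalized_buchdahl_surface_inequality
    (g : ℝ) (hg0 : 0 < g) (hg4 : g < 4)
    (R : ℝ) (hR : 0 < R)
    (f : ℝ → ℝ)
    (hf_nonneg : ∀ q : ℝ, 0 ≤ q → 0 ≤ f q)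
    (hf_mono : MonotoneOn f (Set.Ici 0))
    (hf_cont : ContinuousOn f (Set.Ici 0))
    (hf_pos : ∀ q : ℝ, 0 < q → 0 < f q)
    (m p : ℝ → ℝ)
    (hm_cont : ContinuousOn m (Set.Icc 0 R))
    (hp_cont : ContinuousOn p (Set.Icc 0 R))
    (hm0 : m 0 = 0)
    (hm_pos : ∀ r ∈ Set.Ioo 0 R, 0 < m r)
    (h2m : ∀ r ∈ Set.Ioo 0 R, 2 * m r < r)
    (hp_pos : ∀ r ∈ Set.Ico 0 R, 0 < p r)
    (hpR : p R = 0)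
    (hTOV_m : ∀ r ∈ Set.Ioo 0 R,
      HasDerivAt m (4 * Real.pi * r ^ 2 * f (p r)) r)
    (hTOV_p : ∀ r ∈ Set.Ioo 0 R,
      HasDerivAt p (-(f (p r) * m r / r ^ 2) * (1 + p r / f (p r)) *
        (1 + 4 * Real.pi * r ^ 3 * p r / m r) * (1 - 2 * m r / r)⁻¹) r)
    (hreg : Filter.Tendsto (fun r => m r / r ^ 3) (nhdsWithin 0 (Set.Ioi 0))
      (nhds (4 * Real.pi / 3 * f (p 0))))
    (hsigma : ∀ r ∈ Set.Ico 0 R, p r / f (p r) < 2 / Real.sqrt g - 1) :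
    2 * m R / R ≤ (8 - 2 * g) / (9 - 2 * g) := by
  have hball : IsStaticFluidBall R (f ∘ p) m p :=
    ⟨hR, hm_cont, hp_cont, hm0, h2m, fun r hr ↦ hf_pos _ (hp_pos r hr), hp_pos, hpR, hTOV_m,
      hTOV_p, hreg⟩
  have hρ_anti : AntitoneOn (f ∘ p) (Ioo 0 R) :=
    (hball.antitoneOn_comp_pressure hf_mono).mono Ioo_subset_Icc_self
  exact generalized_buchdahl_surface_inequality_general hg0 hball
    (fun _ ↦ hball.density_le_meanDensity hρ_anti) fun r hr ↦ (hsigma r hr).le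
end

section
/- Every regular perfect fluid solution with non-decreasing equation of state f that satisfies the dominant energy condition, i.e. p(r) < f(p(r)) for all r ∈ [0,R), obeys the surface bound 2M/R ≤ 6/7, where M = m(R) is the total mass and R the surface radius. -/
/-!
Write `u = 4πr³p`. For an incompressible ball the function
`H = (1 - 2m/r) ((m + u/3) / (m + u))²` is the first integral of the Tolman–Oppenheimer–Volkoff
equation behind the interior Schwarzschild solution. For a general ball, `H'` has the sign of
`(3m - 4πr³ρ) ((m + u)² - 2u(r - 2m))`, and its first factor is nonnegative because the density
decreases outwards. So `H` can decrease only where `(m + u)² < 2u(r - 2m)`. There, `p ≤ kρ` gives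
`u ≤ 3km` and hence the pointwise bound `H ≥ c`, where `c = (1 + k)² / (9(1 + k)² - 8)`. The
center of the ball lies in this region, so `H` starts above `c` and can never cross below it. At
the surface `u = 0` and `H = 1 - 2M/R`. The dominant energy condition is `k = 1`, where `c = 1/7`.
-/

open Set Filter Topology
open scoped Real

section Calculus

variable {f g f' g' : ℝ → ℝ} {a b c : ℝ}

theorem le_of_hasDerivAt_le (hab : a ≤ b)
    (hf : ContinuousOn f (Icc a b)) (hf' : ∀ x ∈ Ioo a b, HasDerivAt f (f' x) x)
    (hg : ContinuousOn g (Icc a b)) (hg' : ∀ x ∈ Ioo a b, HasDerivAt g (g' x) x)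
    (hle : ∀ x ∈ Ioo a b, f' x ≤ g' x) (ha : f a ≤ g a) : f b ≤ g b := by
  have hmono : MonotoneOn (fun x ↦ g x - f x) (Icc a b) := by
    refine monotoneOn_of_hasDerivWithinAt_nonneg (f' := fun x ↦ g' x - f' x)
      (convex_Icc a b) (hg.sub hf) ?_ ?_ <;> rw [interior_Icc] <;> intro x hx
    · exact ((hg' x hx).sub (hf' x hx)).hasDerivWithinAt
    · exact sub_nonneg.2 (hle x hx)
  have := hmono (left_mem_Icc.2 hab) (right_mem_Icc.2 hab) hab
  linarith

theorem le_of_hasDerivAt_nonneg_of_lt (hab : a ≤ b)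
    (hf : ContinuousOn f (Icc a b)) (hf' : ∀ x ∈ Ioo a b, HasDerivAt f (f' x) x)
    (hnonneg : ∀ x ∈ Ioo a b, f x < c → 0 ≤ f' x) (ha : c ≤ f a) : c ≤ f b := by
  by_contra! hb
  have hcompact : IsCompact (Icc a b ∩ f ⁻¹' Ici c) :=
    isCompact_Icc.of_isClosed_subset (hf.preimage_isClosed_of_isClosed isClosed_Icc isClosed_Ici)
      inter_subset_left
  obtain ⟨d, ⟨hd, hcd⟩, hlast⟩ := hcompact.exists_isGreatest ⟨a, left_mem_Icc.2 hab, ha⟩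
  have hbelow : ∀ x ∈ Ioo d b, f x < c := fun x hx ↦ by
    by_contra! hcx
    exact hx.1.not_ge (hlast ⟨⟨hd.1.trans hx.1.le, hx.2.le⟩, hcx⟩)
  have hsub : Ioo d b ⊆ Ioo a b := Ioo_subset_Ioo_left hd.1
  exact hb.not_ge <| le_of_hasDerivAt_le hd.2 continuousOn_const
    (fun x _ ↦ hasDerivAt_const x c) (hf.mono (Icc_subset_Icc_left hd.1))
    (fun x hx ↦ hf' x (hsub hx)) (fun x hx ↦ hnonneg x (hsub hx) (hbelow x hx)) hcd

end Calculus

/-- A static, spherically symmetric perfect fluid ball of radius `R` in units `G = c = 1`, with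
mass function `m`, pressure `p` and equation of state `ρ = f(p)`, which is positive and
non-decreasing for positive pressures: the mass function vanishes at the center, no
horizon is present, the pressure vanishes exactly at the surface, and the Tolman–Oppenheimer–Volkoff
equations hold in the interior. -/
structure IsFluidBall (f m p : ℝ → ℝ) (R : ℝ) : Prop where
  radius_pos : 0 < R
  eos_pos : ∀ q, 0 < q → 0 < f q
  eos_mono : MonotoneOn f (Ioi 0)
  continuousOn_mass : ContinuousOn m (Icc 0 R)
  continuousOn_pressure : ContinuousOn p (Icc 0 R)
  mass_zero : m 0 = 0
  two_mul_mass_lt : ∀ r ∈ Ioo 0 R, 2 * m r < r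
  pressure_pos : ∀ r ∈ Ico 0 R, 0 < p r
  pressure_radius : p R = 0
  hasDerivAt_mass : ∀ r ∈ Ioo 0 R, HasDerivAt m (4 * π * r ^ 2 * f (p r)) r
  hasDerivAt_pressure : ∀ r ∈ Ioo 0 R,
    HasDerivAt p (-(f (p r) * m r / r ^ 2) * (1 + p r / f (p r)) *
      (1 + 4 * π * r ^ 3 * p r / m r) * (1 - 2 * m r / r)⁻¹) r

/-- The contribution `4πr³p` of the pressure to the gravitating mass `m + 4πr³p` in the
Tolman–Oppenheimer–Volkoff equation. -/
noncomputable def pressureMass (p : ℝ → ℝ) (r : ℝ) : ℝ := 4 * π * r ^ 3 * p r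

/-- The function `(1 - 2m/r) ((m + u/3) / (m + u))²` with `u = 4πr³p`. It is constant when the
density is, and equals `1 - 2M/R` at the surface. -/
noncomputable def buchdahlFunction (m p : ℝ → ℝ) (r : ℝ) : ℝ :=
  (1 - 2 * m r / r) * ((m r + pressureMass p r / 3) / (m r + pressureMass p r)) ^ 2

theorem buchdahlFunction_of_pressure_eq_zero {m p : ℝ → ℝ} {r : ℝ} (hm : m r ≠ 0)
    (hp : p r = 0) : buchdahlFunction m p r = 1 - 2 * m r / r := by
  simp [buchdahlFunction, pressureMass, hp, hm]

theorem one_add_sq_mul_le_of_sq_le {k m u r : ℝ} (hm : 0 ≤ m) (hu : 0 ≤ u)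
    (huk : u ≤ 3 * k * m) (hr : 2 * m ≤ r) (h : (m + u) ^ 2 ≤ 2 * u * (r - 2 * m)) :
    (1 + k) ^ 2 * (m + u) ^ 2 * r ≤ (9 * (1 + k) ^ 2 - 8) * (m + u / 3) ^ 2 * (r - 2 * m) := by
  -- With `x = u / m`, the function `(1 + 6x + x²) / (1 + x/3)²` is increasing on `[0, 3k]`.
  have hquad : (1 + k) ^ 2 * ((m + u) ^ 2 + 4 * m * u) ≤
      (9 * (1 + k) ^ 2 - 8) * (m + u / 3) ^ 2 := by
    have hfactor : (9 * (1 + k) ^ 2 - 8) * (m + u / 3) ^ 2 -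
        (1 + k) ^ 2 * ((m + u) ^ 2 + 4 * m * u) =
        (3 * k * m - u) * (16 / 3 * m + 8 / 9 * (3 * k * m + u)) := by ring
    rw [← sub_nonneg, hfactor]
    exact mul_nonneg (sub_nonneg.2 huk) (by linarith)
  have : 0 ≤ r - 2 * m := sub_nonneg.2 hr
  calc (1 + k) ^ 2 * (m + u) ^ 2 * r
      = (1 + k) ^ 2 * ((m + u) ^ 2 * (r - 2 * m) + 2 * m * (m + u) ^ 2) := by ring
    _ ≤ (1 + k) ^ 2 * ((m + u) ^ 2 * (r - 2 * m) + 2 * m * (2 * u * (r - 2 * m))) := by gcongr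
    _ = (1 + k) ^ 2 * ((m + u) ^ 2 + 4 * m * u) * (r - 2 * m) := by ring
    _ ≤ (9 * (1 + k) ^ 2 - 8) * (m + u / 3) ^ 2 * (r - 2 * m) := by gcongr

namespace IsFluidBall

variable {f m p : ℝ → ℝ} {R r k : ℝ}

theorem density_pos (h : IsFluidBall f m p R) (hr : r ∈ Ico 0 R) : 0 < f (p r) :=
  h.eos_pos _ (h.pressure_pos r hr)

theorem mass_pos (h : IsFluidBall f m p R) (hr : r ∈ Ioc 0 R) : 0 < m r := by
  have hmono : StrictMonoOn m (Icc 0 R) := by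
    refine strictMonoOn_of_hasDerivWithinAt_pos (f' := fun x ↦ 4 * π * x ^ 2 * f (p x))
      (convex_Icc 0 R) h.continuousOn_mass ?_ ?_ <;> rw [interior_Icc] <;> intro x hx
    · exact (h.hasDerivAt_mass x hx).hasDerivWithinAt
    · have := h.density_pos (Ioo_subset_Ico_self hx)
      have := hx.1
      positivity
  simpa [h.mass_zero] using
    hmono (left_mem_Icc.2 h.radius_pos.le) (Ioc_subset_Icc_self hr) hr.1

theorem pressureMass_pos (h : IsFluidBall f m p R) (hr : r ∈ Ioo 0 R) :
    0 < pressureMass p r := by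
  have := h.pressure_pos r (Ioo_subset_Ico_self hr)
  have := hr.1
  unfold pressureMass
  positivity

theorem mass_add_pressureMass_pos (h : IsFluidBall f m p R) (hr : r ∈ Ioc 0 R) :
    0 < m r + pressureMass p r := by
  obtain hlt | rfl := hr.2.lt_or_eq
  · exact add_pos (h.mass_pos hr) (h.pressureMass_pos ⟨hr.1, hlt⟩)
  · simpa [pressureMass, h.pressure_radius] using h.mass_pos hr

theorem hasDerivAt_pressure_eq (h : IsFluidBall f m p R) (hr : r ∈ Ioo 0 R) :
    HasDerivAt p
      (-((f (p r) + p r) * (m r + pressureMass p r) / (r * (r - 2 * m r)))) r := by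
  have hr₀ : r ≠ 0 := hr.1.ne'
  have hm : m r ≠ 0 := (h.mass_pos (Ioo_subset_Ioc_self hr)).ne'
  have hρ : f (p r) ≠ 0 := (h.density_pos (Ioo_subset_Ico_self hr)).ne'
  have : r - 2 * m r ≠ 0 := (sub_pos.2 (h.two_mul_mass_lt r hr)).ne'
  refine (h.hasDerivAt_pressure r hr).congr_deriv ?_
  rw [pressureMass, one_sub_div hr₀]
  field_simp

theorem antitoneOn_pressure (h : IsFluidBall f m p R) : AntitoneOn p (Icc 0 R) := by
  refine antitoneOn_of_hasDerivWithinAt_nonpos (convex_Icc 0 R) h.continuousOn_pressure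
    (f' := fun x ↦ -((f (p x) + p x) * (m x + pressureMass p x) / (x * (x - 2 * m x))))
    ?_ ?_ <;> rw [interior_Icc] <;> intro x hx
  · exact (h.hasDerivAt_pressure_eq hx).hasDerivWithinAt
  · have := hx.1
    have := h.density_pos (Ioo_subset_Ico_self hx)
    have := h.pressure_pos x (Ioo_subset_Ico_self hx)
    have := h.mass_add_pressureMass_pos (Ioo_subset_Ioc_self hx)
    have := sub_pos.2 (h.two_mul_mass_lt x hx)
    exact neg_nonpos.2 (by positivity)

theorem antitoneOn_density (h : IsFluidBall f m p R) :
    AntitoneOn (fun r ↦ f (p r)) (Ico 0 R) :=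
  fun _ hr _ hs hrs ↦ h.eos_mono (h.pressure_pos _ hs) (h.pressure_pos _ hr)
    (h.antitoneOn_pressure (Ico_subset_Icc_self hr) (Ico_subset_Icc_self hs) hrs)

theorem density_mul_volume_le_mass (h : IsFluidBall f m p R) (hr : r ∈ Ioo 0 R) :
    4 * π / 3 * f (p r) * r ^ 3 ≤ m r := by
  refine le_of_hasDerivAt_le (f := fun x ↦ 4 * π / 3 * f (p r) * x ^ 3) hr.1.le (by fun_prop)
    (fun x _ ↦ (hasDerivAt_pow 3 x).const_mul _)
    (h.continuousOn_mass.mono (Icc_subset_Icc_right hr.2.le))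
    (fun x hx ↦ h.hasDerivAt_mass x ⟨hx.1, hx.2.trans hr.2⟩) (fun x hx ↦ ?_)
    (by simp [h.mass_zero])
  have hρ : f (p r) ≤ f (p x) := h.antitoneOn_density ⟨hx.1.le, hx.2.trans hr.2⟩
    (Ioo_subset_Ico_self hr) hx.2.le
  calc 4 * π / 3 * f (p r) * ((3 : ℕ) * x ^ (3 - 1)) = 4 * π * x ^ 2 * f (p r) := by
        push_cast; ring
    _ ≤ 4 * π * x ^ 2 * f (p x) := by gcongr

theorem mass_le_central_density_mul_volume (h : IsFluidBall f m p R) (hr : r ∈ Ioo 0 R) :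
    m r ≤ 4 * π / 3 * f (p 0) * r ^ 3 := by
  refine le_of_hasDerivAt_le (g := fun x ↦ 4 * π / 3 * f (p 0) * x ^ 3) hr.1.le
    (h.continuousOn_mass.mono (Icc_subset_Icc_right hr.2.le))
    (fun x hx ↦ h.hasDerivAt_mass x ⟨hx.1, hx.2.trans hr.2⟩) (by fun_prop)
    (fun x _ ↦ (hasDerivAt_pow 3 x).const_mul _) (fun x hx ↦ ?_) (by simp [h.mass_zero])
  have hρ : f (p x) ≤ f (p 0) := h.antitoneOn_density (left_mem_Ico.2 h.radius_pos)
    ⟨hx.1.le, hx.2.trans hr.2⟩ hx.1.le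
  calc 4 * π * x ^ 2 * f (p x) ≤ 4 * π * x ^ 2 * f (p 0) := by gcongr
    _ = 4 * π / 3 * f (p 0) * ((3 : ℕ) * x ^ (3 - 1)) := by push_cast; ring

theorem pos_of_pressure_le (h : IsFluidBall f m p R) (hr : r ∈ Ico 0 R)
    (hpk : p r ≤ k * f (p r)) : 0 < k :=
  pos_of_mul_pos_left ((h.pressure_pos r hr).trans_le hpk) (h.density_pos hr).le

theorem pressureMass_le (h : IsFluidBall f m p R) (hr : r ∈ Ioo 0 R)
    (hpk : p r ≤ k * f (p r)) : pressureMass p r ≤ 3 * k * m r := by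
  have := hr.1
  have := h.pos_of_pressure_le (Ioo_subset_Ico_self hr) hpk
  calc pressureMass p r ≤ 4 * π * r ^ 3 * (k * f (p r)) := by unfold pressureMass; gcongr
    _ = 3 * k * (4 * π / 3 * f (p r) * r ^ 3) := by ring
    _ ≤ 3 * k * m r := by gcongr; exact h.density_mul_volume_le_mass hr

theorem tendsto_mass_div_sq (h : IsFluidBall f m p R) :
    Tendsto (fun r ↦ m r / r ^ 2) (𝓝[>] 0) (𝓝 0) := by
  have hlin : Tendsto (fun r : ℝ ↦ 4 * π / 3 * f (p 0) * r) (𝓝[>] 0) (𝓝 0) := by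
    have : Continuous fun r : ℝ ↦ 4 * π / 3 * f (p 0) * r := by fun_prop
    simpa using (this.tendsto 0).mono_left nhdsWithin_le_nhds
  refine squeeze_zero' ?_ ?_ hlin <;>
    filter_upwards [Ioo_mem_nhdsGT h.radius_pos] with r hr
  · have := h.mass_pos (Ioo_subset_Ioc_self hr)
    positivity
  · rw [div_le_iff₀ (pow_pos hr.1 2)]
    linarith [h.mass_le_central_density_mul_volume hr]

theorem eventually_sq_mass_add_pressureMass_lt (h : IsFluidBall f m p R) :
    ∀ᶠ r in 𝓝[>] 0, (m r + pressureMass p r) ^ 2 < 2 * pressureMass p r * (r - 2 * m r) := by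
  -- After division by `r⁴`, the left side tends to `0` and the right side to `8πp(0) > 0`.
  have hr : Tendsto (fun r : ℝ ↦ r) (𝓝[>] 0) (𝓝 0) := tendsto_id.mono_left nhdsWithin_le_nhds
  have hm := h.tendsto_mass_div_sq
  have hp : Tendsto p (𝓝[>] 0) (𝓝 (p 0)) := by
    rw [← nhdsWithin_Ioo_eq_nhdsGT h.radius_pos]
    exact (h.continuousOn_pressure 0 (left_mem_Icc.2 h.radius_pos.le)).mono Ioo_subset_Icc_self
  have hleft : Tendsto (fun r ↦ (m r / r ^ 2 + 4 * π * r * p r) ^ 2) (𝓝[>] 0) (𝓝 0) := by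
    simpa using (hm.add ((hr.const_mul (4 * π)).mul hp)).pow 2
  have hright : Tendsto (fun r ↦ 8 * π * p r * (1 - 2 * (r * (m r / r ^ 2)))) (𝓝[>] 0)
      (𝓝 (8 * π * p 0)) := by
    simpa using (hp.const_mul (8 * π)).mul (((hr.mul hm).const_mul 2).const_sub 1)
  have hp₀ : 0 < 8 * π * p 0 :=
    mul_pos (by positivity) (h.pressure_pos 0 (left_mem_Ico.2 h.radius_pos))
  filter_upwards [hleft.eventually_lt hright hp₀, self_mem_nhdsWithin] with r hlt (hr₀ : 0 < r)
  calc (m r + pressureMass p r) ^ 2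
      = r ^ 4 * (m r / r ^ 2 + 4 * π * r * p r) ^ 2 := by unfold pressureMass; field_simp
    _ < r ^ 4 * (8 * π * p r * (1 - 2 * (r * (m r / r ^ 2)))) := by gcongr
    _ = 2 * pressureMass p r * (r - 2 * m r) := by unfold pressureMass; field_simp; ring

theorem continuousOn_buchdahlFunction (h : IsFluidBall f m p R) :
    ContinuousOn (buchdahlFunction m p) (Ioc 0 R) := by
  have hm : ContinuousOn m (Ioc 0 R) := h.continuousOn_mass.mono Ioc_subset_Icc_self
  have hp : ContinuousOn p (Ioc 0 R) := h.continuousOn_pressure.mono Ioc_subset_Icc_self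
  have hu : ContinuousOn (pressureMass p) (Ioc 0 R) := by unfold pressureMass; fun_prop
  have hr : ∀ r ∈ Ioc 0 R, r ≠ 0 := fun r hr ↦ hr.1.ne'
  have hQ : ∀ r ∈ Ioc 0 R, m r + pressureMass p r ≠ 0 :=
    fun r hr ↦ (h.mass_add_pressureMass_pos hr).ne'
  unfold buchdahlFunction
  fun_prop (disch := assumption)

theorem hasDerivAt_pressureMass (h : IsFluidBall f m p R) (hr : r ∈ Ioo 0 R) :
    HasDerivAt (pressureMass p)
      (3 * pressureMass p r / r -
        (4 * π * r ^ 3 * f (p r) + pressureMass p r) * (m r + pressureMass p r) /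
          (r * (r - 2 * m r))) r := by
  refine (((hasDerivAt_pow 3 r).const_mul (4 * π)).mul
    (h.hasDerivAt_pressure_eq hr)).congr_deriv ?_
  unfold pressureMass
  field_simp
  push_cast
  ring

theorem hasDerivAt_buchdahlFunction (h : IsFluidBall f m p R) (hr : r ∈ Ioo 0 R) :
    HasDerivAt (buchdahlFunction m p)
      (2 / (3 * r ^ 2) * (m r + pressureMass p r / 3) / (m r + pressureMass p r) ^ 3 *
        (3 * m r - 4 * π * r ^ 3 * f (p r)) *
        ((m r + pressureMass p r) ^ 2 - 2 * pressureMass p r * (r - 2 * m r))) r := by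
  have hr₀ : r ≠ 0 := hr.1.ne'
  have hw : r - 2 * m r ≠ 0 := (sub_pos.2 (h.two_mul_mass_lt r hr)).ne'
  have hQ : m r + pressureMass p r ≠ 0 :=
    (h.mass_add_pressureMass_pos (Ioo_subset_Ioc_self hr)).ne'
  have dm := h.hasDerivAt_mass r hr
  have du := h.hasDerivAt_pressureMass hr
  have dredshift : HasDerivAt (fun x ↦ 1 - 2 * m x / x)
      (2 * (m r - 4 * π * r ^ 3 * f (p r)) / r ^ 2) r :=
    (((dm.const_mul 2).fun_div (hasDerivAt_id' r) hr₀).const_sub 1).congr_deriv (by ring)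
  have dratio : HasDerivAt (fun x ↦ (m x + pressureMass p x / 3) / (m x + pressureMass p x))
      (2 / (3 * r) * (m r * (4 * π * r ^ 3 * f (p r) + pressureMass p r) /
          ((m r + pressureMass p r) * (r - 2 * m r)) -
        pressureMass p r * (3 * m r - 4 * π * r ^ 3 * f (p r)) /
          (m r + pressureMass p r) ^ 2)) r := by
    refine ((dm.fun_add (du.div_const 3)).fun_div (dm.fun_add du) hQ).congr_deriv ?_
    field_simp
    ring
  refine (dredshift.fun_mul (dratio.fun_pow 2)).congr_deriv ?_
  simp only [Nat.add_one_sub_one, pow_one, Nat.cast_ofNat, one_sub_div hr₀]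
  field_simp
  ring

theorem le_buchdahlFunction_of_sq_le (h : IsFluidBall f m p R) (hr : r ∈ Ioo 0 R)
    (hpk : p r ≤ k * f (p r))
    (hsq : (m r + pressureMass p r) ^ 2 ≤ 2 * pressureMass p r * (r - 2 * m r)) :
    (1 + k) ^ 2 / (9 * (1 + k) ^ 2 - 8) ≤ buchdahlFunction m p r := by
  have hr₀ := hr.1
  have hQ := h.mass_add_pressureMass_pos (Ioo_subset_Ioc_self hr)
  have hk := h.pos_of_pressure_le (Ioo_subset_Ico_self hr) hpk
  have hc : 0 < 9 * (1 + k) ^ 2 - 8 := by nlinarith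
  rw [buchdahlFunction, one_sub_div hr₀.ne', div_pow, div_mul_div_comm,
    div_le_div_iff₀ hc (by positivity)]
  linarith [one_add_sq_mul_le_of_sq_le (h.mass_pos (Ioo_subset_Ioc_self hr)).le
    (h.pressureMass_pos hr).le (h.pressureMass_le hr hpk) (h.two_mul_mass_lt r hr).le hsq]

theorem le_buchdahlFunction_radius (h : IsFluidBall f m p R)
    (hpk : ∀ r ∈ Ioo 0 R, p r ≤ k * f (p r)) :
    (1 + k) ^ 2 / (9 * (1 + k) ^ 2 - 8) ≤ buchdahlFunction m p R := by
  obtain ⟨a, hstart, ha⟩ :=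
    (h.eventually_sq_mass_add_pressureMass_lt.and (Ioo_mem_nhdsGT h.radius_pos)).exists
  have hsub : Ioo a R ⊆ Ioo 0 R := Ioo_subset_Ioo_left ha.1.le
  refine le_of_hasDerivAt_nonneg_of_lt ha.2.le
    (h.continuousOn_buchdahlFunction.mono fun x hx ↦ ⟨ha.1.trans_le hx.1, hx.2⟩)
    (fun r hr ↦ h.hasDerivAt_buchdahlFunction (hsub hr)) (fun r hr hlt ↦ ?_)
    (h.le_buchdahlFunction_of_sq_le ha (hpk a ha) hstart.le)
  have hr' := hsub hr
  have hr₀ := hr'.1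
  have hm := h.mass_pos (Ioo_subset_Ioc_self hr')
  have hu := h.pressureMass_pos hr'
  have hdensity : 0 ≤ 3 * m r - 4 * π * r ^ 3 * f (p r) := by
    linarith [h.density_mul_volume_le_mass hr']
  have hregion : 0 ≤ (m r + pressureMass p r) ^ 2 - 2 * pressureMass p r * (r - 2 * m r) := by
    by_contra! hneg
    exact hlt.not_ge (h.le_buchdahlFunction_of_sq_le hr' (hpk r hr') (sub_neg.1 hneg).le)
  positivity

end IsFluidBall

theorem buchdahl_dominant_energy_bound_general {f m p : ℝ → ℝ} {R k : ℝ}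
    (h : IsFluidBall f m p R) (hpk : ∀ r ∈ Ioo 0 R, p r ≤ k * f (p r)) :
    2 * m R / R ≤ 8 * ((1 + k) ^ 2 - 1) / (9 * (1 + k) ^ 2 - 8) := by
  have hmid : R / 2 ∈ Ioo 0 R := ⟨half_pos h.radius_pos, half_lt_self h.radius_pos⟩
  have hk := h.pos_of_pressure_le (Ioo_subset_Ico_self hmid) (hpk _ hmid)
  have hsurface := h.le_buchdahlFunction_radius hpk
  rw [buchdahlFunction_of_pressure_eq_zero (h.mass_pos (right_mem_Ioc.2 h.radius_pos)).ne'
    h.pressure_radius] at hsurface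
  have hc : 9 * (1 + k) ^ 2 - 8 ≠ 0 := by nlinarith
  calc 2 * m R / R ≤ 1 - (1 + k) ^ 2 / (9 * (1 + k) ^ 2 - 8) := by linarith
    _ = 8 * ((1 + k) ^ 2 - 1) / (9 * (1 + k) ^ 2 - 8) := by rw [one_sub_div hc]; ring

/-- **Buchdahl-type bound under the dominant energy condition.**
Every regular perfect fluid solution (units `G = c = 1`) with a non-decreasing equation of
state `ρ = f(p)` that satisfies the dominant energy condition `p(r) < f(p(r))` for all
`r ∈ [0,R)` obeys `2M/R ≤ 6/7`, where `M = m(R)` and `R` is the surface radius. -/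
theorem buchdahl_dominant_energy_bound
    (R : ℝ) (hR : 0 < R)
    (f : ℝ → ℝ)
    (hf_nonneg : ∀ q : ℝ, 0 ≤ q → 0 ≤ f q)
    (hf_mono : MonotoneOn f (Set.Ici 0))
    (hf_cont : ContinuousOn f (Set.Ici 0))
    (hf_pos : ∀ q : ℝ, 0 < q → 0 < f q)
    (m p : ℝ → ℝ)
    (hm_cont : ContinuousOn m (Set.Icc 0 R))
    (hp_cont : ContinuousOn p (Set.Icc 0 R))
    (hm0 : m 0 = 0)
    (hm_pos : ∀ r ∈ Set.Ioo 0 R, 0 < m r)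
    (h2m : ∀ r ∈ Set.Ioo 0 R, 2 * m r < r)
    (hp_pos : ∀ r ∈ Set.Ico 0 R, 0 < p r)
    (hpR : p R = 0)
    (hTOV_m : ∀ r ∈ Set.Ioo 0 R,
      HasDerivAt m (4 * Real.pi * r ^ 2 * f (p r)) r)
    (hTOV_p : ∀ r ∈ Set.Ioo 0 R,
      HasDerivAt p (-(f (p r) * m r / r ^ 2) * (1 + p r / f (p r)) *
        (1 + 4 * Real.pi * r ^ 3 * p r / m r) * (1 - 2 * m r / r)⁻¹) r)
    (hreg : Filter.Tendsto (fun r => m r / r ^ 3) (nhdsWithin 0 (Set.Ioi 0))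
      (nhds (4 * Real.pi / 3 * f (p 0))))
    (hdec : ∀ r ∈ Set.Ico 0 R, p r < f (p r)) :
    2 * m R / R ≤ 6 / 7 := by
  have hball : IsFluidBall f m p R := ⟨hR, hf_pos, hf_mono.mono Ioi_subset_Ici_self, hm_cont,
    hp_cont, hm0, h2m, hp_pos, hpR, hTOV_m, hTOV_p⟩
  have hle : ∀ r ∈ Ioo 0 R, p r ≤ 1 * f (p r) := fun r hr ↦
    (hdec r (Ioo_subset_Ico_self hr)).le.trans_eq (one_mul _).symm
  exact (buchdahl_dominant_energy_bound_general hball hle).trans_eq (by norm_num)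
end

section
/- For every regular perfect fluid solution with non-decreasing equation of state f, the density never exceeds the average density: 4π r³ f(p(r)) ≤ 3 m(r) for all r ∈ (0,R). (Equivalently, in the dynamical-systems variables, U ≤ 3/4 along every regular solution.) -/
/-!
Every factor in the Tolman–Oppenheimer–Volkoff equation has a definite sign, so the pressure, and
with a non-decreasing equation of state also the density, decreases outwards. Hence the density at
radius `r` bounds the density inside the ball of radius `r` from below, so the mass of the ball is
at least that of a homogeneous ball with this density.
-/

section MassGrowth

open Set

variable {a b : ℝ}

theorem sub_le_sub_of_hasDerivAt_le {u v u' v' : ℝ → ℝ} (hab : a ≤ b)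
    (hu : ContinuousOn u (Icc a b)) (hv : ContinuousOn v (Icc a b))
    (hu' : ∀ s ∈ Ioo a b, HasDerivAt u (u' s) s) (hv' : ∀ s ∈ Ioo a b, HasDerivAt v (v' s) s)
    (hle : ∀ s ∈ Ioo a b, u' s ≤ v' s) :
    u b - u a ≤ v b - v a := by
  have hmono : MonotoneOn (v - u) (Icc a b) := by
    refine monotoneOn_of_hasDerivWithinAt_nonneg (f' := v' - u') (convex_Icc a b) (hv.sub hu) ?_ ?_
    all_goals rw [interior_Icc]; intro s hs
    · exact ((hv' s hs).sub (hu' s hs)).hasDerivWithinAt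
    · exact sub_nonneg.2 (hle s hs)
  have hvu : v a - u a ≤ v b - u b :=
    hmono (left_mem_Icc.2 hab) (right_mem_Icc.2 hab) hab
  linarith

theorem shell_volume_mul_le_mass_sub_of_le_density {m ρ : ℝ → ℝ} {c : ℝ} (hab : a ≤ b)
    (hm : ContinuousOn m (Icc a b))
    (hm' : ∀ s ∈ Ioo a b, HasDerivAt m (4 * Real.pi * s ^ 2 * ρ s) s)
    (hc : ∀ s ∈ Ioo a b, c ≤ ρ s) :
    4 * Real.pi / 3 * (b ^ 3 - a ^ 3) * c ≤ m b - m a := by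
  have hball (s : ℝ) :
      HasDerivAt (fun s ↦ 4 * Real.pi / 3 * s ^ 3 * c) (4 * Real.pi * s ^ 2 * c) s := by
    refine (((hasDerivAt_pow 3 s).const_mul (4 * Real.pi / 3)).mul_const c).congr_deriv ?_
    push_cast
    ring
  calc 4 * Real.pi / 3 * (b ^ 3 - a ^ 3) * c
      = 4 * Real.pi / 3 * b ^ 3 * c - 4 * Real.pi / 3 * a ^ 3 * c := by ring
    _ ≤ m b - m a :=
        sub_le_sub_of_hasDerivAt_le hab (by fun_prop) hm (fun s _ ↦ hball s) hm' fun s hs ↦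
          mul_le_mul_of_nonneg_left (hc s hs) (by positivity)

end MassGrowth

/-- The right-hand side of the Tolman–Oppenheimer–Volkoff equation: the radial derivative of the
pressure, in terms of the density `ρ`, the pressure `p`, the mass `m` and the radius `r`. -/
noncomputable def tovPressureGradient (ρ p m r : ℝ) : ℝ :=
  -(ρ * m / r ^ 2) * (1 + p / ρ) * (1 + 4 * Real.pi * r ^ 3 * p / m) * (1 - 2 * m / r)⁻¹

theorem tovPressureGradient_nonpos {ρ p m r : ℝ} (hρ : 0 ≤ ρ) (hp : 0 ≤ p) (hm : 0 ≤ m)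
    (hmr : 2 * m < r) : tovPressureGradient ρ p m r ≤ 0 := by
  have hr : 0 < r := by linarith
  have hmetric : 0 < 1 - 2 * m / r := sub_pos.2 ((div_lt_one hr).2 hmr)
  unfold tovPressureGradient
  simp only [neg_mul, neg_nonpos]
  positivity

/-- A perfect fluid ball with equation of state `f`, mass `m` and pressure `p` inside the radius
`R`. Nothing is required at `R` itself, where the fluid need not end: a solution of infinite
extent is one for every `R > 0`. -/
structure IsTOVSolution (f m p : ℝ → ℝ) (R : ℝ) : Prop where
  continuousOn_mass : ContinuousOn m (Set.Ico 0 R)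
  continuousOn_pressure : ContinuousOn p (Set.Ico 0 R)
  mass_zero : m 0 = 0
  mass_pos : ∀ r ∈ Set.Ioo 0 R, 0 < m r
  two_mul_mass_lt : ∀ r ∈ Set.Ioo 0 R, 2 * m r < r
  pressure_pos : ∀ r ∈ Set.Ico 0 R, 0 < p r
  hasDerivAt_mass : ∀ r ∈ Set.Ioo 0 R, HasDerivAt m (4 * Real.pi * r ^ 2 * f (p r)) r
  hasDerivAt_pressure :
    ∀ r ∈ Set.Ioo 0 R, HasDerivAt p (tovPressureGradient (f (p r)) (p r) (m r) r) r

namespace IsTOVSolution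

open Set

variable {f m p : ℝ → ℝ} {R : ℝ}

theorem antitoneOn_pressure (h : IsTOVSolution f m p R) (hf_pos : ∀ q, 0 < q → 0 < f q) :
    AntitoneOn p (Ico 0 R) := by
  refine antitoneOn_of_hasDerivWithinAt_nonpos (convex_Ico 0 R) h.continuousOn_pressure
    (f' := fun r ↦ tovPressureGradient (f (p r)) (p r) (m r) r) ?_ ?_
  all_goals rw [interior_Ico]; intro r hr
  · exact (h.hasDerivAt_pressure r hr).hasDerivWithinAt
  · have hp : 0 < p r := h.pressure_pos r (Ioo_subset_Ico_self hr)
    exact tovPressureGradient_nonpos (hf_pos _ hp).le hp.le (h.mass_pos r hr).le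
      (h.two_mul_mass_lt r hr)

theorem antitoneOn_density (h : IsTOVSolution f m p R) (hf_mono : MonotoneOn f (Ioi 0))
    (hf_pos : ∀ q, 0 < q → 0 < f q) : AntitoneOn (f ∘ p) (Ico 0 R) :=
  hf_mono.comp_AntitoneOn (h.antitoneOn_pressure hf_pos) h.pressure_pos

end IsTOVSolution

theorem density_le_average_density_general {f m p : ℝ → ℝ} {R : ℝ} (h : IsTOVSolution f m p R)
    (hf_mono : MonotoneOn f (Set.Ioi 0)) (hf_pos : ∀ q, 0 < q → 0 < f q) :
    ∀ r ∈ Set.Ioo 0 R, 4 * Real.pi * r ^ 3 * f (p r) ≤ 3 * m r := by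
  intro r hr
  have hdensity : ∀ s ∈ Set.Ioo 0 r, f (p r) ≤ f (p s) := fun s hs ↦
    h.antitoneOn_density hf_mono hf_pos ⟨hs.1.le, hs.2.trans hr.2⟩ ⟨hr.1.le, hr.2⟩ hs.2.le
  have hmass : 4 * Real.pi / 3 * (r ^ 3 - 0 ^ 3) * f (p r) ≤ m r - m 0 :=
    shell_volume_mul_le_mass_sub_of_le_density hr.1.le
      (h.continuousOn_mass.mono (Set.Icc_subset_Ico_right hr.2))
      (fun s hs ↦ h.hasDerivAt_mass s ⟨hs.1, hs.2.trans hr.2⟩) hdensity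
  rw [h.mass_zero] at hmass
  linarith

/-- **The density never exceeds the average density.**
For every regular perfect fluid solution (units `G = c = 1`) with a non-decreasing
equation of state `ρ = f(p)`, one has `4π r³ f(p(r)) ≤ 3 m(r)` for all `r ∈ (0,R)`;
i.e. `ρ(r) ≤ 3m(r)/(4π r³)` (equivalently `U ≤ 3/4` in dynamical-systems variables). -/
theorem density_le_average_density
    (R : ℝ) (hR : 0 < R)
    (f : ℝ → ℝ)
    (hf_nonneg : ∀ q : ℝ, 0 ≤ q → 0 ≤ f q)
    (hf_mono : MonotoneOn f (Set.Ici 0))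
    (hf_cont : ContinuousOn f (Set.Ici 0))
    (hf_pos : ∀ q : ℝ, 0 < q → 0 < f q)
    (m p : ℝ → ℝ)
    (hm_cont : ContinuousOn m (Set.Icc 0 R))
    (hp_cont : ContinuousOn p (Set.Icc 0 R))
    (hm0 : m 0 = 0)
    (hm_pos : ∀ r ∈ Set.Ioo 0 R, 0 < m r)
    (h2m : ∀ r ∈ Set.Ioo 0 R, 2 * m r < r)
    (hp_pos : ∀ r ∈ Set.Ico 0 R, 0 < p r)
    (hpR : p R = 0)
    (hTOV_m : ∀ r ∈ Set.Ioo 0 R,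
      HasDerivAt m (4 * Real.pi * r ^ 2 * f (p r)) r)
    (hTOV_p : ∀ r ∈ Set.Ioo 0 R,
      HasDerivAt p (-(f (p r) * m r / r ^ 2) * (1 + p r / f (p r)) *
        (1 + 4 * Real.pi * r ^ 3 * p r / m r) * (1 - 2 * m r / r)⁻¹) r)
    (hreg : Filter.Tendsto (fun r => m r / r ^ 3) (nhdsWithin 0 (Set.Ioi 0))
      (nhds (4 * Real.pi / 3 * f (p 0)))) :
    ∀ r ∈ Set.Ioo 0 R, 4 * Real.pi * r ^ 3 * f (p r) ≤ 3 * m r :=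
  density_le_average_density_general
    ⟨hm_cont.mono Set.Ico_subset_Icc_self, hp_cont.mono Set.Ico_subset_Icc_self, hm0, hm_pos, h2m,
      hp_pos, hTOV_m, hTOV_p⟩
    (hf_mono.mono Set.Ioi_subset_Ici_self) hf_pos
end
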